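/- Suppose {ψ_m} ⊂ N_NLS is a minimising sequence for E_NLS, i.e. E_NLS(ψ_m) → c_NLS as m → ∞. Then there exist a sequence {x_m} of real numbers, a strictly increasing sequence of indices m_j, θ ∈ [0, 2π) and y ∈ ℝ such that ψ_{m_j}(· + x_{m_j}) converges to e^{iθ}φ_NLS(· + y) in H¹(ℝ;ℂ), that is, ∫ |ψ_{m_j}(x + x_{m_j}) − e^{iθ}φ_NLS(x + y)|² dx + ∫ |ψ′_{m_j}(x + x_{m_j}) − e^{iθ}φ_NLS′(x + y)|² dx → 0 as j → ∞. -/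

import Mathlib

open MeasureTheory Filter

noncomputable def sech (x : ℝ) : ℝ := 1 / Real.cosh x

/-- `H1PairC ψ ψ'` expresses that `ψ` belongs to `H¹(ℝ;ℂ)` with weak derivative `ψ'`. -/
def H1PairC (ψ ψ' : ℝ → ℂ) : Prop :=
  Continuous ψ ∧ Integrable (fun x => ‖ψ x‖ ^ 2) ∧ Integrable (fun x => ‖ψ' x‖ ^ 2) ∧
    ∀ a b : ℝ, a ≤ b → ψ b - ψ a = ∫ t in a..b, ψ' t

/-- The nonlinear Schrödinger energy `E_NLS(ψ) = ∫ ((g₂/8)|ψ'|² + (3/8)A|ψ|⁴) dx`. -/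
noncomputable def ENLS (g₂ A : ℝ) (ψ ψ' : ℝ → ℂ) : ℝ :=
  ∫ x : ℝ, (g₂ / 8 * ‖ψ' x‖ ^ 2 + (3 / 8) * A * ‖ψ x‖ ^ 4)


open Topology Set in
/-- `f` is locally absolutely continuous with a.e. derivative `f'`. -/
def ACd (f f' : ℝ → ℝ) : Prop :=
  (∀ a b, AbsolutelyContinuousOnInterval f a b) ∧ ∀ᵐ x, HasDerivAt f (f' x) x

namespace ACd

theorem mul {f f' g g' : ℝ → ℝ} (hf : ACd f f') (hg : ACd g g') :
    ACd (fun x => f x * g x) (fun x => f' x * g x + f x * g' x) := by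
  refine ⟨fun a b => (hf.1 a b).fun_mul (hg.1 a b), ?_⟩
  filter_upwards [hf.2, hg.2] with x h1 h2
  exact h1.mul h2

theorem add {f f' g g' : ℝ → ℝ} (hf : ACd f f') (hg : ACd g g') :
    ACd (fun x => f x + g x) (fun x => f' x + g' x) := by
  refine ⟨fun a b => (hf.1 a b).fun_add (hg.1 a b), ?_⟩
  filter_upwards [hf.2, hg.2] with x h1 h2
  exact h1.add h2

theorem of_C1 {f f' : ℝ → ℝ} (h : ∀ x, HasDerivAt f (f' x) x) (hc : Continuous f') :
    ACd f f' := by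
  refine ⟨fun a b => ContDiffOn.absolutelyContinuousOnInterval (ContDiff.contDiffOn ?_),
    Eventually.of_forall h⟩
  rw [contDiff_one_iff_deriv]
  refine ⟨fun x => (h x).differentiableAt, ?_⟩
  have : deriv f = f' := funext fun x => (h x).deriv
  rwa [this]

theorem ae_deriv {f f' : ℝ → ℝ} (h : ACd f f') : deriv f =ᵐ[volume] f' := by
  filter_upwards [h.2] with x hx using hx.deriv

theorem aesm {f f' : ℝ → ℝ} (h : ACd f f') : AEStronglyMeasurable f' volume :=
  (aestronglyMeasurable_deriv f volume).congr h.ae_deriv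

theorem ii {f f' : ℝ → ℝ} (h : ACd f f') (a b : ℝ) : IntervalIntegrable f' volume a b :=
  (h.1 a b).intervalIntegrable_deriv.congr_ae (ae_restrict_of_ae h.ae_deriv)

theorem integral {f f' : ℝ → ℝ} (h : ACd f f') (a b : ℝ) :
    ∫ x in a..b, f' x = f b - f a := by
  rw [← (h.1 a b).integral_deriv_eq_sub]
  apply intervalIntegral.integral_congr_ae
  filter_upwards [h.ae_deriv] with x hx _ using hx.symm

theorem cont {f f' : ℝ → ℝ} (h : ACd f f') : Continuous f := by
  rw [continuous_iff_continuousAt]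
  intro x
  have := (h.1 (x - 1) (x + 1)).continuousOn
  apply this.continuousAt
  rw [Set.uIcc_of_le (by linarith)]
  exact Icc_mem_nhds (by linarith) (by linarith)

theorem congr {f f' g g' : ℝ → ℝ} (h : ACd f f') (h1 : ∀ x, f x = g x) (h2 : ∀ x, f' x = g' x) :
    ACd g g' := by
  have e1 : f = g := funext h1
  have e2 : f' = g' := funext h2
  rwa [← e1, ← e2]

theorem of_integral {f f' : ℝ → ℝ} (hi : ∀ a b, IntervalIntegrable f' volume a b)
    (h : ∀ x, f x = f 0 + ∫ t in (0:ℝ)..x, f' t) : ACd f f' := by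
  have hl : LocallyIntegrable f' volume := by
    intro x
    refine ⟨Set.Ioc (x - 1) (x + 1), Ioc_mem_nhds (by linarith) (by linarith), ?_⟩
    exact (intervalIntegrable_iff_integrableOn_Ioc_of_le (by linarith)).1 (hi _ _)
  have e : f = fun x => f 0 + ∫ t in (0:ℝ)..x, f' t := funext h
  constructor
  · intro a b
    rw [e]
    have c1 : AbsolutelyContinuousOnInterval (fun _ : ℝ => f 0) a b :=
      ContDiffOn.absolutelyContinuousOnInterval contDiffOn_const
    have c2 := (hi (min 0 (min a b)) (max 0 (max a b))).absolutelyContinuousOnInterval_intervalIntegral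
      (c := 0) (by rw [Set.uIcc_of_le (by simp)]; simp)
    refine c1.fun_add (c2.mono ?_)
    rw [Set.uIcc_of_le (by simp : min 0 (min a b) ≤ max 0 (max a b)), Set.uIcc]
    exact Set.Icc_subset_Icc (by simp) (by simp)
  · filter_upwards [_root_.LocallyIntegrable.ae_hasDerivAt_integral hl] with x hx
    rw [e]
    exact (hx 0).const_add (f 0)

end ACd

theorem integrable_limit_zero_top {f : ℝ → ℝ} {l : ℝ} (hf : Integrable f)
    (h : Tendsto f atTop (nhds l)) : l = 0 := by
  refine IntegrableAtFilter.eq_zero_of_tendsto (μ := volume) ⟨Set.univ, univ_mem, by simpa using hf⟩ ?_ h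
  intro s hs
  obtain ⟨a, ha⟩ := mem_atTop_sets.1 hs
  rw [← top_le_iff, ← Real.volume_Ici (a := a)]
  exact measure_mono ha

theorem integrable_limit_zero_bot {f : ℝ → ℝ} {l : ℝ} (hf : Integrable f)
    (h : Tendsto f atBot (nhds l)) : l = 0 := by
  refine IntegrableAtFilter.eq_zero_of_tendsto (μ := volume) ⟨Set.univ, univ_mem, by simpa using hf⟩ ?_ h
  intro s hs
  obtain ⟨a, ha⟩ := mem_atBot_sets.1 hs
  rw [← top_le_iff, ← Real.volume_Iic (a := a)]
  exact measure_mono ha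

theorem ACd.lim {f f' : ℝ → ℝ} (h : ACd f f') (hf : Integrable f) (hf' : Integrable f') :
    Tendsto f atTop (nhds 0) ∧ Tendsto f atBot (nhds 0) := by
  have e : ∀ x, f x = f 0 + ∫ t in (0:ℝ)..x, f' t := fun x => by rw [h.integral]; ring
  have e2 : ∀ x, f x = f 0 - ∫ t in x..(0:ℝ), f' t := fun x => by rw [h.integral]; ring
  constructor
  · have t1 : Tendsto f atTop (nhds (f 0 + ∫ t in Set.Ioi (0:ℝ), f' t)) := by
      rw [show f = fun x => f 0 + ∫ t in (0:ℝ)..x, f' t from funext e]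
      simpa using (intervalIntegral_tendsto_integral_Ioi 0 hf'.integrableOn tendsto_id).const_add (f 0)
    have := integrable_limit_zero_top hf t1
    rwa [this] at t1
  · have t1 : Tendsto f atBot (nhds (f 0 - ∫ t in Set.Iic (0:ℝ), f' t)) := by
      rw [show f = fun x => f 0 - ∫ t in x..(0:ℝ), f' t from funext e2]
      simpa using (intervalIntegral_tendsto_integral_Iic 0 hf'.integrableOn tendsto_id).const_sub (f 0)
    have := integrable_limit_zero_bot hf t1
    rwa [this] at t1

theorem H1_ii {ψ ψ' : ℝ → ℂ} (h : H1PairC ψ ψ') (hpos : 0 < ∫ x, ‖ψ x‖ ^ 2) (a b : ℝ) :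
    IntervalIntegrable ψ' volume a b := by
  obtain ⟨hc, hi, -, hint⟩ := h
  have key : ∀ a b, a ≤ b → IntervalIntegrable ψ' volume a b := by
    intro a b hab
    by_contra hn
    have hout : ∀ a' b', a' ≤ a → b ≤ b' → ψ b' = ψ a' := by
      intro a' b' h1 h2
      have : ¬ IntervalIntegrable ψ' volume a' b' := by
        intro hh
        apply hn
        apply hh.mono_set
        rw [Set.uIcc_of_le hab, Set.uIcc_of_le (by linarith)]
        exact Set.Icc_subset_Icc h1 h2
      have h3 := hint a' b' (by linarith)
      rw [intervalIntegral.integral_undef this] at h3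
      exact sub_eq_zero.1 h3
    have hb0 : ∀ x, b ≤ x → ψ x = ψ a := fun x hx => hout a x le_rfl hx
    have ha : ψ a = 0 := by
      have t1 : Tendsto (fun x => ‖ψ x‖ ^ 2) atTop (nhds (‖ψ a‖ ^ 2)) := by
        apply tendsto_const_nhds.congr'
        filter_upwards [eventually_ge_atTop b] with x hx
        rw [hb0 x hx]
      have := integrable_limit_zero_top hi t1
      simpa using this
    have hz : ∀ x, ψ x = 0 := by
      intro x
      rcases le_total x a with h1 | h1
      · rw [← hout x b h1 le_rfl, hb0 b le_rfl, ha]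
      rcases le_total b x with h2 | h2
      · rw [hb0 x h2, ha]
      by_cases h3 : IntervalIntegrable ψ' volume a x
      · have h4 : ¬ IntervalIntegrable ψ' volume x b := fun h4 => hn (h3.trans h4)
        have h5 := hint x b h2
        rw [intervalIntegral.integral_undef h4, hb0 b le_rfl, ha] at h5
        simpa using h5
      · have h5 := hint a x h1
        rw [intervalIntegral.integral_undef h3, ha] at h5
        simpa using h5
    simp [hz] at hpos
  rcases le_total a b with h | h
  · exact key a b h
  · exact (key b a h).symm

theorem H1_eq {ψ ψ' : ℝ → ℂ} (h : H1PairC ψ ψ') (x : ℝ) :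
    ψ x = ψ 0 + ∫ t in (0:ℝ)..x, ψ' t := by
  rcases le_total 0 x with h1 | h1
  · rw [← h.2.2.2 0 x h1]; ring
  · rw [intervalIntegral.integral_symm, ← h.2.2.2 x 0 h1]; ring

theorem H1_acd_re {ψ ψ' : ℝ → ℂ} (h : H1PairC ψ ψ') (hpos : 0 < ∫ x, ‖ψ x‖ ^ 2) :
    ACd (fun x => (ψ x).re) (fun x => (ψ' x).re) := by
  have hi := H1_ii h hpos
  apply ACd.of_integral
  · intro a b
    exact ⟨(hi a b).1.re, (hi a b).2.re⟩
  · intro x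
    have := Complex.reCLM.intervalIntegral_comp_comm (hi 0 x)
    simp only [Complex.reCLM_apply] at this
    rw [this, ← Complex.add_re, ← H1_eq h x]

theorem H1_acd_im {ψ ψ' : ℝ → ℂ} (h : H1PairC ψ ψ') (hpos : 0 < ∫ x, ‖ψ x‖ ^ 2) :
    ACd (fun x => (ψ x).im) (fun x => (ψ' x).im) := by
  have hi := H1_ii h hpos
  apply ACd.of_integral
  · intro a b
    exact ⟨(hi a b).1.im, (hi a b).2.im⟩
  · intro x
    have := Complex.imCLM.intervalIntegral_comp_comm (hi 0 x)
    simp only [Complex.imCLM_apply] at this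
    rw [this, ← Complex.add_im, ← H1_eq h x]

theorem H1_translate {ψ ψ' : ℝ → ℂ} (h : H1PairC ψ ψ') (y : ℝ) :
    H1PairC (fun x => ψ (x + y)) (fun x => ψ' (x + y)) := by
  obtain ⟨hc, hi, hi', hint⟩ := h
  refine ⟨by fun_prop, hi.comp_add_right y, hi'.comp_add_right y, ?_⟩
  intro a b hab
  rw [hint (a + y) (b + y) (by linarith), intervalIntegral.integral_comp_add_right]

theorem ACd.var_le {f f' b : ℝ → ℝ} (h : ACd f f') (hb : Integrable b) (hle : ∀ x, |f' x| ≤ b x)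
    (x y : ℝ) : |f x - f y| ≤ ∫ t, b t := by
  rw [← h.integral y x, ← Real.norm_eq_abs]
  refine (intervalIntegral.norm_integral_le_integral_norm_uIoc).trans ?_
  have i1 : Integrable f' := hb.mono' h.aesm (Eventually.of_forall hle)
  refine (setIntegral_le_integral i1.norm (Eventually.of_forall fun t => norm_nonneg _)).trans ?_
  exact integral_mono i1.norm hb hle

/-- The data of a centred function `u + i v` with mass function `N`. -/
structure Ctr (α : ℝ) (u v u' v' N : ℝ → ℝ) : Prop where
  hu : ACd u u'
  hv : ACd v v'
  Iu : Integrable (fun x => u x ^ 2 + v x ^ 2)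
  Iu' : Integrable (fun x => u' x ^ 2 + v' x ^ 2)
  hN : ∀ x, HasDerivAt N (u x ^ 2 + v x ^ 2) x
  N0 : N 0 = 0
  Nt : Tendsto N atTop (nhds α)
  Nb : Tendsto N atBot (nhds (-α))

namespace Ctr

variable {α k : ℝ} {u v u' v' N : ℝ → ℝ}

theorem contN (h : Ctr α u v u' v' N) : Continuous N :=
  continuous_iff_continuousAt.2 fun x => (h.hN x).continuousAt

theorem contn (h : Ctr α u v u' v' N) : Continuous (fun x => u x ^ 2 + v x ^ 2) := by
  have := h.hu.cont
  have := h.hv.cont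
  fun_prop

theorem acdN (h : Ctr α u v u' v' N) : ACd N (fun x => u x ^ 2 + v x ^ 2) :=
  ACd.of_C1 h.hN h.contn

theorem acdn (h : Ctr α u v u' v' N) :
    ACd (fun x => u x ^ 2 + v x ^ 2) (fun x => 2 * (u x * u' x + v x * v' x)) :=
  ((h.hu.mul h.hu).add (h.hv.mul h.hv)).congr (fun x => by ring) (fun x => by ring)

theorem absN (h : Ctr α u v u' v' N) (x : ℝ) : |N x| ≤ α := by
  have hm : Monotone N := by
    apply monotone_of_deriv_nonneg (fun x => (h.hN x).differentiableAt)
    intro x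
    rw [(h.hN x).deriv]
    positivity
  rw [abs_le]
  exact ⟨hm.le_of_tendsto h.Nb x, hm.ge_of_tendsto h.Nt x⟩

theorem mass (h : Ctr α u v u' v' N) : ∫ x, (u x ^ 2 + v x ^ 2) = 2 * α := by
  have t1 := intervalIntegral_tendsto_integral h.Iu tendsto_neg_atTop_atBot tendsto_id
  have t2 : Tendsto (fun x : ℝ => N x - N (-x)) atTop (nhds (α - -α)) :=
    h.Nt.sub (h.Nb.comp tendsto_neg_atTop_atBot)
  have := tendsto_nhds_unique t1 (t2.congr fun x => by rw [h.acdN.integral]; rfl)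
  rw [this]; ring

theorem Bint (h : Ctr α u v u' v' N) :
    Integrable (fun x => (u x ^ 2 + v x ^ 2) + (u' x ^ 2 + v' x ^ 2)) := h.Iu.add h.Iu'

theorem dn_le (u v u' v' : ℝ → ℝ) (x : ℝ) : |2 * (u x * u' x + v x * v' x)| ≤
    (u x ^ 2 + v x ^ 2) + (u' x ^ 2 + v' x ^ 2) := by
  rw [abs_le]
  constructor <;> nlinarith [sq_nonneg (u x + u' x), sq_nonneg (u x - u' x),
    sq_nonneg (v x + v' x), sq_nonneg (v x - v' x)]

theorem dn_int (h : Ctr α u v u' v' N) : Integrable (fun x => 2 * (u x * u' x + v x * v' x)) :=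
  h.Bint.mono' h.acdn.aesm (Eventually.of_forall (dn_le u v u' v'))

theorem nlim (h : Ctr α u v u' v' N) :
    Tendsto (fun x => u x ^ 2 + v x ^ 2) atTop (nhds 0) ∧
    Tendsto (fun x => u x ^ 2 + v x ^ 2) atBot (nhds 0) := h.acdn.lim h.Iu h.dn_int

theorem nbdd (h : Ctr α u v u' v' N) : ∃ C, ∀ x, u x ^ 2 + v x ^ 2 ≤ C := by
  refine ⟨u 0 ^ 2 + v 0 ^ 2 + ∫ x, ((u x ^ 2 + v x ^ 2) + (u' x ^ 2 + v' x ^ 2)), fun x => ?_⟩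
  have := (abs_le.1 (h.acdn.var_le h.Bint (dn_le u v u' v') x 0)).2
  linarith

theorem n2int (h : Ctr α u v u' v' N) : Integrable (fun x => (u x ^ 2 + v x ^ 2) ^ 2) := by
  obtain ⟨C, hC⟩ := h.nbdd
  refine (h.Iu.const_mul C).mono' (h.contn.pow 2).aestronglyMeasurable (Eventually.of_forall ?_)
  intro x
  have : 0 ≤ u x ^ 2 + v x ^ 2 := by positivity
  rw [Real.norm_of_nonneg (by positivity)]
  nlinarith [hC x]

theorem acdG (h : Ctr α u v u' v' N) (k : ℝ) :
    ACd (fun x => k * (N x * (u x ^ 2 + v x ^ 2)) + k ^ 2 / 3 * N x ^ 3)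
      (fun x => k * (u x ^ 2 + v x ^ 2) ^ 2 + k * N x * (2 * (u x * u' x + v x * v' x))
        + k ^ 2 * N x ^ 2 * (u x ^ 2 + v x ^ 2)) := by
  have c : ∀ a : ℝ, ACd (fun _ => a) (fun _ => 0) := fun a =>
    ACd.of_C1 (fun x => hasDerivAt_const x a) continuous_const
  exact (((c k).mul (h.acdN.mul h.acdn)).add
    ((c (k ^ 2 / 3)).mul (h.acdN.mul (h.acdN.mul h.acdN)))).congr
    (fun x => by ring) (fun x => by ring)

theorem Gint (h : Ctr α u v u' v' N) (k : ℝ) :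
    Integrable (fun x => k * (u x ^ 2 + v x ^ 2) ^ 2 + k * N x * (2 * (u x * u' x + v x * v' x))
        + k ^ 2 * N x ^ 2 * (u x ^ 2 + v x ^ 2)) := by
  refine ((h.n2int.const_mul k).add ?_).add ?_
  · refine h.dn_int.bdd_mul (c := |k| * α) ?_ (Eventually.of_forall fun x => ?_)
    · exact (continuous_const.mul h.contN).aestronglyMeasurable
    · rw [Real.norm_eq_abs, abs_mul]
      exact mul_le_mul_of_nonneg_left (h.absN x) (abs_nonneg _)
  · refine h.Iu.bdd_mul (c := k ^ 2 * α ^ 2) ?_ (Eventually.of_forall fun x => ?_)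
    · exact (continuous_const.mul (h.contN.pow 2)).aestronglyMeasurable
    · rw [Real.norm_eq_abs, abs_of_nonneg (by positivity)]
      have := h.absN x
      exact mul_le_mul_of_nonneg_left (sq_le_sq' (abs_le.1 this).1 (abs_le.1 this).2) (by positivity)

theorem Geq (h : Ctr α u v u' v' N) (k : ℝ) :
    ∫ x, (k * (u x ^ 2 + v x ^ 2) ^ 2 + k * N x * (2 * (u x * u' x + v x * v' x))
        + k ^ 2 * N x ^ 2 * (u x ^ 2 + v x ^ 2)) = 2 / 3 * k ^ 2 * α ^ 3 := by
  have t1 := intervalIntegral_tendsto_integral (h.Gint k) tendsto_neg_atTop_atBot tendsto_id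
  have a1 := ((h.Nt.mul h.nlim.1).const_mul k).add ((h.Nt.pow 3).const_mul (k ^ 2 / 3))
  have a2 := ((h.Nb.mul h.nlim.2).const_mul k).add ((h.Nb.pow 3).const_mul (k ^ 2 / 3))
  have t2 := a1.sub (a2.comp tendsto_neg_atTop_atBot)
  have := tendsto_nhds_unique t1 (t2.congr fun x => by rw [(h.acdG k).integral]; rfl)
  rw [this]; ring

/-- the Bogomolny residual density -/
theorem Rpt (k : ℝ) (u v u' v' N : ℝ → ℝ) (x : ℝ) :
    (u' x + k * N x * u x) ^ 2 + (v' x + k * N x * v x) ^ 2 =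
    ((u' x ^ 2 + v' x ^ 2) - k * (u x ^ 2 + v x ^ 2) ^ 2) +
    (k * (u x ^ 2 + v x ^ 2) ^ 2 + k * N x * (2 * (u x * u' x + v x * v' x))
        + k ^ 2 * N x ^ 2 * (u x ^ 2 + v x ^ 2)) := by ring

theorem Rint (h : Ctr α u v u' v' N) (k : ℝ) :
    Integrable (fun x => (u' x + k * N x * u x) ^ 2 + (v' x + k * N x * v x) ^ 2) := by
  simp_rw [Rpt k u v u' v' N]
  exact (h.Iu'.sub (h.n2int.const_mul k)).add (h.Gint k)

theorem Req (h : Ctr α u v u' v' N) (k : ℝ) :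
    ∫ x, ((u' x + k * N x * u x) ^ 2 + (v' x + k * N x * v x) ^ 2) =
    (∫ x, ((u' x ^ 2 + v' x ^ 2) - k * (u x ^ 2 + v x ^ 2) ^ 2)) + 2 / 3 * k ^ 2 * α ^ 3 := by
  simp_rw [Rpt k u v u' v' N]
  have i1 : Integrable (fun x => (u' x ^ 2 + v' x ^ 2) - k * (u x ^ 2 + v x ^ 2) ^ 2) :=
    h.Iu'.sub (h.n2int.const_mul k)
  rw [integral_add i1 (h.Gint k), h.Geq k]

theorem Hbd (h : Ctr α u v u' v' N) (k : ℝ) {s : ℝ} (hs : 0 < s)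
    (hR : ∫ x, ((u' x + k * N x * u x) ^ 2 + (v' x + k * N x * v x) ^ 2) ≤ s ^ 2) (x : ℝ) :
    |u x ^ 2 + v x ^ 2 + k * N x ^ 2 - k * α ^ 2| ≤ (2 * α + 1) * s := by
  have c : ∀ a : ℝ, ACd (fun _ => a) (fun _ => 0) := fun a =>
    ACd.of_C1 (fun x => hasDerivAt_const x a) continuous_const
  have hH : ACd (fun x => u x ^ 2 + v x ^ 2 + k * N x ^ 2)
      (fun x => 2 * (u x * (u' x + k * N x * u x) + v x * (v' x + k * N x * v x))) :=
    (h.acdn.add ((c k).mul (h.acdN.mul h.acdN))).congr (fun x => by ring) (fun x => by ring)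
  have hb := (h.Iu.const_mul s).add ((h.Rint k).const_mul s⁻¹)
  have hle : ∀ x, |2 * (u x * (u' x + k * N x * u x) + v x * (v' x + k * N x * v x))| ≤
      s * (u x ^ 2 + v x ^ 2) +
        s⁻¹ * ((u' x + k * N x * u x) ^ 2 + (v' x + k * N x * v x) ^ 2) := by
    intro x
    have gen : ∀ a b : ℝ, |2 * (a * b)| ≤ s * a ^ 2 + s⁻¹ * b ^ 2 := by
      intro a b
      have h1 : s * a ^ 2 + s⁻¹ * b ^ 2 - 2 * (a * b) = s⁻¹ * (s * a - b) ^ 2 := by field_simp; ring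
      have h2 : s * a ^ 2 + s⁻¹ * b ^ 2 + 2 * (a * b) = s⁻¹ * (s * a + b) ^ 2 := by field_simp; ring
      have h3 : 0 ≤ s⁻¹ * (s * a - b) ^ 2 := by positivity
      have h4 : 0 ≤ s⁻¹ * (s * a + b) ^ 2 := by positivity
      rw [abs_le]; constructor <;> linarith
    have g1 := gen (u x) (u' x + k * N x * u x)
    have g2 := gen (v x) (v' x + k * N x * v x)
    rw [mul_add 2]
    refine (abs_add_le _ _).trans ?_
    linarith
  have hv := hH.var_le hb hle x
  have hI : ∫ x, (s * (u x ^ 2 + v x ^ 2) +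
        s⁻¹ * ((u' x + k * N x * u x) ^ 2 + (v' x + k * N x * v x) ^ 2)) ≤ (2 * α + 1) * s := by
    rw [integral_add (h.Iu.const_mul s) ((h.Rint k).const_mul s⁻¹), integral_const_mul,
      integral_const_mul, h.mass]
    have : s⁻¹ * ∫ x, ((u' x + k * N x * u x) ^ 2 + (v' x + k * N x * v x) ^ 2) ≤ s⁻¹ * s ^ 2 :=
      mul_le_mul_of_nonneg_left hR (by positivity)
    have e : s⁻¹ * s ^ 2 = s := by field_simp
    nlinarith
  have lim : Tendsto (fun y => |u x ^ 2 + v x ^ 2 + k * N x ^ 2 - (u y ^ 2 + v y ^ 2 + k * N y ^ 2)|)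
      atBot (nhds |u x ^ 2 + v x ^ 2 + k * N x ^ 2 - (0 + k * (-α) ^ 2)|) :=
    ((h.nlim.2.add ((h.Nb.pow 2).const_mul k)).const_sub _).abs
  have := le_of_tendsto lim (Eventually.of_forall fun y => (hv y).trans hI)
  simpa using this

end Ctr

section profile

/-- mass profile -/
noncomputable def Tp (k α x : ℝ) : ℝ := α * (Real.sinh (k * α * x) / Real.cosh (k * α * x))

/-- sech profile -/
noncomputable def Sp (k α x : ℝ) : ℝ := 1 / Real.cosh (k * α * x)

variable {k α : ℝ}

theorem Sp_pos (k α x : ℝ) : 0 < Sp k α x := by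
  unfold Sp
  have := Real.cosh_pos (k * α * x)
  positivity

theorem Sp_le_one (k α x : ℝ) : Sp k α x ≤ 1 := by
  unfold Sp
  rw [div_le_one (Real.cosh_pos _)]
  exact Real.one_le_cosh _

theorem Sp_cont (k α : ℝ) : Continuous (Sp k α) := by
  unfold Sp
  refine continuous_const.div (Real.continuous_cosh.comp (by fun_prop)) fun x => (Real.cosh_pos _).ne'

theorem lin_deriv (c x : ℝ) : HasDerivAt (fun x : ℝ => c * x) c x := by
  simpa using (hasDerivAt_id x).const_mul c

theorem Tp_deriv (k α x : ℝ) : HasDerivAt (Tp k α) (k * α ^ 2 * Sp k α x ^ 2) x := by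
  have h1 := (lin_deriv (k * α) x).sinh
  have h2 := (lin_deriv (k * α) x).cosh
  have hc := (Real.cosh_pos (k * α * x)).ne'
  have h3 := (h1.div h2 hc).const_mul α
  refine h3.congr_deriv ?_
  unfold Sp
  have := Real.cosh_sq_sub_sinh_sq (k * α * x)
  generalize Real.cosh (k * α * x) = c at *
  generalize Real.sinh (k * α * x) = d at *
  field_simp
  linear_combination (k * α ^ 2) * this

theorem Tp_sq (k α x : ℝ) : k * α ^ 2 * Sp k α x ^ 2 = k * (α ^ 2 - Tp k α x ^ 2) := by
  have hc := (Real.cosh_pos (k * α * x)).ne'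
  unfold Sp Tp
  have := Real.cosh_sq_sub_sinh_sq (k * α * x)
  generalize Real.cosh (k * α * x) = c at *
  generalize Real.sinh (k * α * x) = d at *
  field_simp
  linear_combination (-(k * α ^ 2)) * this

theorem Sp_deriv (k α x : ℝ) : HasDerivAt (Sp k α) (-(k * Tp k α x * Sp k α x)) x := by
  have h2 := (lin_deriv (k * α) x).cosh
  have hc := (Real.cosh_pos (k * α * x)).ne'
  have h3 := (hasDerivAt_const x (1:ℝ)).div h2 hc
  refine h3.congr_deriv ?_
  unfold Sp Tp
  field_simp
  ring

theorem Tp_cont (k α : ℝ) : Continuous (Tp k α) :=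
  continuous_iff_continuousAt.2 fun x => (Tp_deriv k α x).continuousAt

theorem Tp_abs (hα : 0 < α) (x : ℝ) : |Tp k α x| ≤ α := by
  unfold Tp
  rw [← Real.tanh_eq_sinh_div_cosh, abs_mul, abs_of_pos hα]
  have := (Real.abs_tanh_lt_one (k * α * x)).le
  nlinarith

theorem tanh_top : Tendsto Real.tanh atTop (nhds 1) := by
  have h0 : Tendsto (fun x : ℝ => 1 - Real.exp (-x)) atTop (nhds (1 - 0)) :=
    (Real.tendsto_exp_neg_atTop_nhds_zero).const_sub 1
  rw [sub_zero] at h0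
  refine tendsto_of_tendsto_of_tendsto_of_le_of_le h0 tendsto_const_nhds ?_
    (fun x => (Real.tanh_lt_one x).le)
  intro x
  have hc := Real.cosh_pos x
  have h1 := Real.one_le_cosh x
  have e := Real.cosh_sub_sinh x
  have hp := Real.exp_pos (-x)
  simp only
  rw [Real.tanh_eq_sinh_div_cosh, le_div_iff₀ hc]
  nlinarith

theorem Tp_top (hk : 0 < k) (hα : 0 < α) : Tendsto (Tp k α) atTop (nhds α) := by
  have h1 : Tendsto (fun x : ℝ => k * α * x) atTop atTop :=
    tendsto_id.const_mul_atTop (by positivity)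
  have h2 := (tanh_top.comp h1).const_mul α
  rw [mul_one] at h2
  refine h2.congr fun x => ?_
  simp [Tp, Real.tanh_eq_sinh_div_cosh]

theorem Tp_neg (k α x : ℝ) : Tp k α (-x) = - Tp k α x := by
  simp [Tp]; ring

theorem Tp_bot (hk : 0 < k) (hα : 0 < α) : Tendsto (Tp k α) atBot (nhds (-α)) := by
  refine (((Tp_top hk hα).comp tendsto_neg_atBot_atTop).neg).congr fun x => ?_
  simp [Tp_neg]

theorem Sp_int (hk : 0 < k) (hα : 0 < α) : Integrable (Sp k α) := by
  have hb : 0 < k * α := by positivity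
  have hd : ∀ x, HasDerivAt (fun x => (k * α)⁻¹ * Real.arctan (Real.sinh (k * α * x)))
      (Sp k α x) x := by
    intro x
    have h1 := ((lin_deriv (k * α) x).sinh.arctan).const_mul (k * α)⁻¹
    refine h1.congr_deriv ?_
    unfold Sp
    have hc := (Real.cosh_pos (k * α * x)).ne'
    rw [show 1 + Real.sinh (k * α * x) ^ 2 = Real.cosh (k * α * x) ^ 2 by rw [Real.cosh_sq]; ring]
    field_simp
  have hi : ∀ a b, IntervalIntegrable (Sp k α) volume a b := fun a b =>
    (Sp_cont k α).intervalIntegrable a b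
  refine integrable_of_intervalIntegral_norm_bounded (l := atTop) (a := fun i : ℝ => -i)
    (b := fun i : ℝ => i) ((k * α)⁻¹ * Real.pi) (fun i => ?_) tendsto_neg_atTop_atBot tendsto_id
    (Eventually.of_forall fun i => ?_)
  · exact (hi _ _).1
  · have : ∀ x, ‖Sp k α x‖ = Sp k α x := fun x => Real.norm_of_nonneg (Sp_pos k α x).le
    simp_rw [this]
    rw [intervalIntegral.integral_eq_sub_of_hasDerivAt (fun x _ => hd x) (hi _ _)]
    have h1 := Real.arctan_lt_pi_div_two (Real.sinh (k * α * i))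
    have h2 := Real.neg_pi_div_two_lt_arctan (Real.sinh (k * α * -i))
    rw [← mul_sub]
    apply mul_le_mul_of_nonneg_left _ (by positivity)
    linarith

theorem Sp2_int (hk : 0 < k) (hα : 0 < α) : Integrable (fun x => Sp k α x ^ 2) := by
  refine (Sp_int hk hα).mono' ((Sp_cont k α).pow 2).aestronglyMeasurable
    (Eventually.of_forall fun x => ?_)
  have := Sp_pos k α x
  have := Sp_le_one k α x
  rw [Real.norm_of_nonneg (by positivity)]
  nlinarith

theorem Sp2_eq (hk : 0 < k) (hα : 0 < α) : k * α ^ 2 * ∫ x, Sp k α x ^ 2 = 2 * α := by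
  rw [← integral_const_mul, integral_of_hasDerivAt_of_tendsto (Tp_deriv k α)
    ((Sp2_int hk hα).const_mul _) (Tp_bot hk hα) (Tp_top hk hα)]
  ring

end profile

theorem Ctr.NT {α k : ℝ} {u v u' v' N : ℝ → ℝ} (h : Ctr α u v u' v' N) (hk : 0 < k) (hα : 0 < α)
    {s : ℝ} (hs : 0 < s)
    (hR : ∫ x, ((u' x + k * N x * u x) ^ 2 + (v' x + k * N x * v x) ^ 2) ≤ s ^ 2) {r x : ℝ}
    (hx : |x| ≤ r) :
    |N x - Tp k α x| ≤ (2 * α + 1) * s * Real.exp (k * (2 * α * r)) * r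
      * Real.exp (k * (2 * α * r)) := by
  have hr : 0 ≤ r := (abs_nonneg x).trans hx
  have hcF : Continuous (fun t => N t + Tp k α t) := h.contN.add (Tp_cont k α)
  let F : ℝ → ℝ := fun x => ∫ t in (0:ℝ)..x, (N t + Tp k α t)
  have hF : ∀ x, HasDerivAt F (N x + Tp k α x) x := fun x =>
    intervalIntegral.integral_hasDerivAt_right (hcF.intervalIntegrable _ _)
      hcF.stronglyMeasurable.stronglyMeasurableAtFilter hcF.continuousAt
  have hFb : ∀ y, |y| ≤ r → |F y| ≤ 2 * α * r := by
    intro y hy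
    have := intervalIntegral.norm_integral_le_of_norm_le_const (a := 0) (b := y)
      (f := fun t => N t + Tp k α t) (C := 2 * α) (fun t _ => by
        rw [Real.norm_eq_abs]
        refine (abs_add_le _ _).trans ?_
        have := h.absN t
        have := Tp_abs (k := k) hα t
        linarith)
    rw [Real.norm_eq_abs, sub_zero] at this
    refine this.trans ?_
    gcongr
  let e : ℝ → ℝ := fun x => u x ^ 2 + v x ^ 2 + k * N x ^ 2 - k * α ^ 2
  have he : ∀ y, |e y| ≤ (2 * α + 1) * s := fun y => h.Hbd k hs hR y
  have hd : ∀ y, HasDerivAt (fun y => (N y - Tp k α y) * Real.exp (k * F y))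
      (e y * Real.exp (k * F y)) y := by
    intro y
    have h1 := ((h.hN y).sub (Tp_deriv k α y)).mul (((hF y).const_mul k).exp)
    refine h1.congr_deriv ?_
    rw [Tp_sq]
    simp only [e, Pi.sub_apply]
    ring
  have hexp : ∀ y, |y| ≤ r → Real.exp (k * F y) ≤ Real.exp (k * (2 * α * r)) := by
    intro y hy
    apply Real.exp_le_exp.2
    exact mul_le_mul_of_nonneg_left (abs_le.1 (hFb y hy)).2 hk.le
  have mv := Convex.norm_image_sub_le_of_norm_hasDerivWithin_le (𝕜 := ℝ) (s := Set.Icc (-r) r) (x := 0) (y := x)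
    (C := (2 * α + 1) * s * Real.exp (k * (2 * α * r)))
    (fun y _ => (hd y).hasDerivWithinAt) (fun y hy => by
      rw [Real.norm_eq_abs, abs_mul, abs_of_pos (Real.exp_pos _)]
      exact mul_le_mul (he y) (hexp y (abs_le.2 hy)) (Real.exp_pos _).le (by positivity))
    (convex_Icc _ _) ⟨by linarith, hr⟩ (abs_le.1 hx)
  simp only [h.N0, Tp, Real.norm_eq_abs, mul_zero, Real.sinh_zero, zero_div, sub_zero, zero_mul] at mv
  change |(N x - Tp k α x) * Real.exp (k * F x)| ≤ _ at mv
  rw [abs_mul, abs_of_pos (Real.exp_pos _)] at mv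
  have h5 : |N x - Tp k α x| = |N x - Tp k α x| * Real.exp (k * F x) * Real.exp (-(k * F x)) := by
    rw [mul_assoc, ← Real.exp_add]; simp
  rw [h5]
  have h6 : Real.exp (-(k * F x)) ≤ Real.exp (k * (2 * α * r)) := by
    apply Real.exp_le_exp.2
    have := (abs_le.1 (hFb x hx)).1
    nlinarith
  apply mul_le_mul _ h6 (Real.exp_pos _).le (by positivity)
  exact mv.trans (by gcongr)

theorem W_est {α k : ℝ} {w w' N : ℝ → ℝ} (hw : ACd w w') (hk : 0 < k) (hα : 0 < α)
    {s C δ x : ℝ} (hs : 0 < s) (hδ : 0 ≤ δ) (hC : ∀ t, |w t| ≤ C)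
    (hI : Integrable (fun t => (w' t + k * N t * w t) ^ 2))
    (hR : ∫ t, (w' t + k * N t * w t) ^ 2 ≤ s ^ 2)
    (hN : ∀ t, |t| ≤ |x| → |N t - Tp k α t| ≤ δ) :
    |Real.cosh (k * α * x) * w x - w 0| ≤
      Real.cosh (k * α * x) * ((s + k * δ * C) * |x| + s) := by
  have hC0 : 0 ≤ C := (abs_nonneg _).trans (hC 0)
  have hc : ACd (fun t => Real.cosh (k * α * t)) (fun t => Real.sinh (k * α * t) * (k * α)) :=
    ACd.of_C1 (fun t => (lin_deriv (k * α) t).cosh)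
      ((Real.continuous_sinh.comp (by fun_prop)).mul continuous_const)
  have hW := hc.mul hw
  have e1 := hW.integral 0 x
  simp only [mul_zero, Real.cosh_zero, one_mul] at e1
  rw [← e1, ← Real.norm_eq_abs]
  refine (intervalIntegral.norm_integral_le_integral_norm_uIoc).trans ?_
  have hpt : ∀ t, |t| ≤ |x| → ‖Real.sinh (k * α * t) * (k * α) * w t + Real.cosh (k * α * t) * w' t‖
      ≤ Real.cosh (k * α * x) * (s + k * δ * C + s⁻¹ * (w' t + k * N t * w t) ^ 2) := by
    intro t ht
    have hct := Real.cosh_pos (k * α * t)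
    have e2 : Real.sinh (k * α * t) * (k * α) * w t + Real.cosh (k * α * t) * w' t =
        Real.cosh (k * α * t) * ((w' t + k * N t * w t) - k * (N t - Tp k α t) * w t) := by
      unfold Tp
      field_simp
      ring
    rw [e2, Real.norm_eq_abs, abs_mul, abs_of_pos hct]
    have h1 : Real.cosh (k * α * t) ≤ Real.cosh (k * α * x) := by
      rw [Real.cosh_le_cosh, abs_mul, abs_mul (k * α)]
      gcongr
    refine mul_le_mul h1 ?_ (abs_nonneg _) (Real.cosh_pos _).le
    refine (abs_sub _ _).trans ?_
    have h2 : |w' t + k * N t * w t| ≤ s + s⁻¹ * (w' t + k * N t * w t) ^ 2 := by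
      generalize w' t + k * N t * w t = q
      have : s + s⁻¹ * q ^ 2 - |q| = s⁻¹ * ((s - |q| / 2) ^ 2 + 3 / 4 * q ^ 2) := by
        rw [← sq_abs q]; field_simp; ring
      have : 0 ≤ s⁻¹ * ((s - |q| / 2) ^ 2 + 3 / 4 * q ^ 2) := by positivity
      linarith
    have h3 : |k * (N t - Tp k α t) * w t| ≤ k * δ * C := by
      rw [abs_mul, abs_mul, abs_of_pos hk]
      have := hN t ht
      have := hC t
      gcongr
    linarith
  have hfin : IntegrableOn (fun _ : ℝ => s + k * δ * C) (Set.uIoc 0 x) :=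
    integrableOn_const (by simp [Set.uIoc])
  have hI2 : IntegrableOn (fun t => s⁻¹ * (w' t + k * N t * w t) ^ 2) (Set.uIoc 0 x) :=
    (hI.const_mul s⁻¹).integrableOn
  have hle : ∫ t in Set.uIoc 0 x, ‖Real.sinh (k * α * t) * (k * α) * w t + Real.cosh (k * α * t) * w' t‖
      ≤ ∫ t in Set.uIoc 0 x,
        Real.cosh (k * α * x) * (s + k * δ * C + s⁻¹ * (w' t + k * N t * w t) ^ 2) := by
    apply setIntegral_mono_on (intervalIntegrable_iff.1 (hW.ii 0 x)).norm
      ((hfin.add hI2).const_mul _) measurableSet_uIoc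
    intro t ht
    apply hpt
    have := Set.uIoc_subset_uIcc ht
    simpa using Set.abs_sub_left_of_mem_uIcc this
  refine hle.trans ?_
  rw [integral_const_mul, integral_add hfin hI2]
  apply mul_le_mul_of_nonneg_left _ (Real.cosh_pos _).le
  have h7 : ∫ t in Set.uIoc 0 x, (s + k * δ * C) = (s + k * δ * C) * |x| := by
    rw [setIntegral_const]
    have e9 : max 0 x - min 0 x = |x| := by rw [max_sub_min_eq_abs, sub_zero]
    simp only [Set.uIoc, Real.volume_real_Ioc, e9, smul_eq_mul, max_eq_left (abs_nonneg x)]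
    ring
  rw [h7]
  gcongr
  refine (setIntegral_le_integral (hI.const_mul s⁻¹)
    (Eventually.of_forall fun t => by simp only [Pi.zero_apply]; positivity)).trans ?_
  rw [integral_const_mul]
  calc _ ≤ s⁻¹ * s ^ 2 := by gcongr
    _ = s := by field_simp

theorem Rint_left {α k : ℝ} {u v u' v' N : ℝ → ℝ} (h : Ctr α u v u' v' N) :
    Integrable (fun x => (u' x + k * N x * u x) ^ 2) ∧
    Integrable (fun x => (v' x + k * N x * v x) ^ 2) := by
  have c1 := h.hu.cont.aestronglyMeasurable (μ := volume)
  have c2 := h.hv.cont.aestronglyMeasurable (μ := volume)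
  have c3 := h.contN.aestronglyMeasurable (μ := volume)
  constructor
  · refine (h.Rint k).mono' ((h.hu.aesm.add ((c3.const_mul k).mul c1)).pow 2)
      (Eventually.of_forall fun x => ?_)
    rw [Real.norm_of_nonneg (by positivity)]
    nlinarith [sq_nonneg (v' x + k * N x * v x)]
  · refine (h.Rint k).mono' ((h.hv.aesm.add ((c3.const_mul k).mul c2)).pow 2)
      (Eventually.of_forall fun x => ?_)
    rw [Real.norm_of_nonneg (by positivity)]
    nlinarith [sq_nonneg (u' x + k * N x * u x)]

theorem delta_lim (k α r : ℝ) {s : ℕ → ℝ} (s0 : Tendsto s atTop (nhds 0)) :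
    Tendsto (fun m => (2 * α + 1) * s m * Real.exp (k * (2 * α * r)) * r
      * Real.exp (k * (2 * α * r))) atTop (nhds 0) := by
  have := (((s0.const_mul (2 * α + 1)).mul_const (Real.exp (k * (2 * α * r)))).mul_const r).mul_const
    (Real.exp (k * (2 * α * r)))
  simpa using this

theorem W_lim {α k C p : ℝ} {w w' N : ℕ → ℝ → ℝ} (hw : ∀ m, ACd (w m) (w' m)) (hk : 0 < k)
    (hα : 0 < α) {s : ℕ → ℝ} (hs : ∀ m, 0 < s m) (s0 : Tendsto s atTop (nhds 0))
    (hC : ∀ m t, |w m t| ≤ C)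
    (hI : ∀ m, Integrable (fun t => (w' m t + k * N m t * w m t) ^ 2))
    (hR : ∀ m, ∫ t, (w' m t + k * N m t * w m t) ^ 2 ≤ s m ^ 2)
    (hN : ∀ m r x, |x| ≤ r → |N m x - Tp k α x| ≤ (2 * α + 1) * s m * Real.exp (k * (2 * α * r)) * r
      * Real.exp (k * (2 * α * r)))
    (hp : Tendsto (fun m => w m 0) atTop (nhds p)) (x : ℝ) :
    Tendsto (fun m => w m x) atTop (nhds (p * Sp k α x)) := by
  have hd := delta_lim k α |x| s0
  have hb : Tendsto (fun m => Real.cosh (k * α * x) * ((s m + k * ((2 * α + 1) * s m *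
      Real.exp (k * (2 * α * |x|)) * |x| * Real.exp (k * (2 * α * |x|))) * C) * |x| + s m))
      atTop (nhds 0) := by
    have := ((((s0.add ((hd.const_mul k).mul_const C)).mul_const |x|).add s0).const_mul
      (Real.cosh (k * α * x)))
    simpa using this
  have h1 : Tendsto (fun m => Real.cosh (k * α * x) * w m x - w m 0) atTop (nhds 0) := by
    refine squeeze_zero_norm (fun m => ?_) hb
    rw [Real.norm_eq_abs]
    exact W_est (hw m) hk hα (hs m) (by have := hs m; positivity) (hC m) (hI m) (hR m)
      (fun t ht => hN m |x| t ht)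
  have h2 := (h1.add hp).mul_const (Sp k α x)
  rw [zero_add] at h2
  refine h2.congr fun m => ?_
  have := (Real.cosh_pos (k * α * x)).ne'
  unfold Sp
  field_simp
  ring

theorem seq_lem {k α p q : ℝ} (hk : 0 < k) (hα : 0 < α) {u v u' v' N : ℕ → ℝ → ℝ}
    (h : ∀ m, Ctr α (u m) (v m) (u' m) (v' m) (N m)) {s : ℕ → ℝ} (hs : ∀ m, 0 < s m)
    (s0 : Tendsto s atTop (nhds 0))
    (hR : ∀ m, ∫ x, ((u' m x + k * N m x * u m x) ^ 2 + (v' m x + k * N m x * v m x) ^ 2) ≤ s m ^ 2)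
    (hp : Tendsto (fun m => u m 0) atTop (nhds p)) (hq : Tendsto (fun m => v m 0) atTop (nhds q)) :
    p ^ 2 + q ^ 2 = k * α ^ 2 ∧
    Tendsto (fun m => ∫ x, ((u m x - p * Sp k α x) ^ 2 + (v m x - q * Sp k α x) ^ 2)) atTop (nhds 0) ∧
    Tendsto (fun m => ∫ x, ((u' m x + p * (k * Tp k α x * Sp k α x)) ^ 2
      + (v' m x + q * (k * Tp k α x * Sp k α x)) ^ 2)) atTop (nhds 0) := by
  obtain ⟨M, hM⟩ := s0.bddAbove_range
  have hM' : ∀ m, s m ≤ M := fun m => hM ⟨m, rfl⟩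
  have hM0 : 0 < M := (hs 0).trans_le (hM' 0)
  have hpq : p ^ 2 + q ^ 2 = k * α ^ 2 := by
    have a1 : Tendsto (fun m => u m 0 ^ 2 + v m 0 ^ 2 - k * α ^ 2) atTop (nhds 0) := by
      have := s0.const_mul (2 * α + 1)
      rw [mul_zero] at this
      refine squeeze_zero_norm (fun m => ?_) this
      have := (h m).Hbd k (hs m) (hR m) 0
      rw [(h m).N0] at this
      simpa using this
    have a2 := ((hp.pow 2).add (hq.pow 2)).sub_const (k * α ^ 2)
    have := tendsto_nhds_unique a1 a2
    linarith
  obtain ⟨C, hC0, hCu, hCv⟩ : ∃ C, 0 ≤ C ∧ (∀ m t, |u m t| ≤ C) ∧ (∀ m t, |v m t| ≤ C) := by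
    have key : ∀ m t, u m t ^ 2 + v m t ^ 2 ≤ k * α ^ 2 + (2 * α + 1) * M := by
      intro m t
      have := (abs_le.1 ((h m).Hbd k (hs m) (hR m) t)).2
      have : (2 * α + 1) * s m ≤ (2 * α + 1) * M := by
        have := hM' m
        gcongr
      have : 0 ≤ k * N m t ^ 2 := by positivity
      linarith
    have hK : 0 ≤ k * α ^ 2 + (2 * α + 1) * M := by positivity
    refine ⟨k * α ^ 2 + (2 * α + 1) * M + 1, by positivity, fun m t => ?_, fun m t => ?_⟩
    · apply abs_le_of_sq_le_sq _ (by positivity)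
      nlinarith [key m t, sq_nonneg (v m t)]
    · apply abs_le_of_sq_le_sq _ (by positivity)
      nlinarith [key m t, sq_nonneg (u m t)]
  have hNT : ∀ m r x, |x| ≤ r → |N m x - Tp k α x| ≤
      (2 * α + 1) * s m * Real.exp (k * (2 * α * r)) * r * Real.exp (k * (2 * α * r)) :=
    fun m r x hx => (h m).NT hk hα (hs m) (hR m) hx
  have hNlim : ∀ x, Tendsto (fun m => N m x - Tp k α x) atTop (nhds 0) := fun x =>
    squeeze_zero_norm (fun m => hNT m |x| x le_rfl) (delta_lim k α |x| s0)
  have iu : ∀ m, Integrable (fun x => (u' m x + k * N m x * u m x) ^ 2) := fun m =>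
    (Rint_left (h m)).1
  have iv : ∀ m, Integrable (fun x => (v' m x + k * N m x * v m x) ^ 2) := fun m =>
    (Rint_left (h m)).2
  have hRu : ∀ m, ∫ x, (u' m x + k * N m x * u m x) ^ 2 ≤ s m ^ 2 := fun m =>
    (integral_mono (iu m) ((h m).Rint k) fun x => by
      simp only; nlinarith [sq_nonneg (v' m x + k * N m x * v m x)]).trans (hR m)
  have hRv : ∀ m, ∫ x, (v' m x + k * N m x * v m x) ^ 2 ≤ s m ^ 2 := fun m =>
    (integral_mono (iv m) ((h m).Rint k) fun x => by
      simp only; nlinarith [sq_nonneg (u' m x + k * N m x * u m x)]).trans (hR m)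
  have hul := W_lim (fun m => (h m).hu) hk hα hs s0 hCu iu hRu hNT hp
  have hvl := W_lim (fun m => (h m).hv) hk hα hs s0 hCv iv hRv hNT hq
  have cS := Sp_cont k α
  have iS2 := Sp2_int hk hα
  have cross_bd : ∀ m x, ‖(p * u m x + q * v m x) * Sp k α x‖ ≤ ((|p| + |q|) * C) * Sp k α x := by
    intro m x
    have hSx := Sp_pos k α x
    rw [Real.norm_eq_abs, abs_mul, abs_of_pos hSx]
    refine mul_le_mul_of_nonneg_right ?_ hSx.le
    refine (abs_add_le _ _).trans ?_
    rw [abs_mul, abs_mul]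
    nlinarith [mul_le_mul_of_nonneg_left (hCu m x) (abs_nonneg p),
      mul_le_mul_of_nonneg_left (hCv m x) (abs_nonneg q)]
  have cross_m : ∀ m, AEStronglyMeasurable (fun x => (p * u m x + q * v m x) * Sp k α x) volume := by
    intro m
    have := (h m).hu.cont
    have := (h m).hv.cont
    exact Continuous.aestronglyMeasurable (by fun_prop)
  have cross_i : ∀ m, Integrable (fun x => (p * u m x + q * v m x) * Sp k α x) := fun m =>
    ((Sp_int hk hα).const_mul _).mono' (cross_m m) (Eventually.of_forall (cross_bd m))
  have cross_l : Tendsto (fun m => ∫ x, (p * u m x + q * v m x) * Sp k α x) atTop (nhds (2 * α)) := by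
    have e : 2 * α = ∫ x, (p * (p * Sp k α x) + q * (q * Sp k α x)) * Sp k α x := by
      rw [← Sp2_eq hk hα, ← hpq, ← integral_const_mul]
      congr 1; ext x; ring
    rw [e]
    refine tendsto_integral_of_dominated_convergence _ cross_m ((Sp_int hk hα).const_mul _)
      (fun m => Eventually.of_forall (cross_bd m)) (Eventually.of_forall fun x => ?_)
    exact (((hul x).const_mul p).add ((hvl x).const_mul q)).mul_const _
  have Dpt : ∀ m x, (u m x - p * Sp k α x) ^ 2 + (v m x - q * Sp k α x) ^ 2 =
      ((u m x ^ 2 + v m x ^ 2) - 2 * ((p * u m x + q * v m x) * Sp k α x))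
        + k * α ^ 2 * Sp k α x ^ 2 := by
    intro m x; rw [← hpq]; ring
  have Di0 : ∀ m, Integrable (fun x => (u m x ^ 2 + v m x ^ 2) -
      2 * ((p * u m x + q * v m x) * Sp k α x)) := fun m =>
    (h m).Iu.sub ((cross_i m).const_mul 2)
  have Di : ∀ m, Integrable (fun x => (u m x - p * Sp k α x) ^ 2 + (v m x - q * Sp k α x) ^ 2) := by
    intro m
    simp_rw [Dpt]
    exact (Di0 m).add (iS2.const_mul _)
  have Dl : Tendsto (fun m => ∫ x, ((u m x - p * Sp k α x) ^ 2 + (v m x - q * Sp k α x) ^ 2))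
      atTop (nhds 0) := by
    have e : ∀ m, ∫ x, ((u m x - p * Sp k α x) ^ 2 + (v m x - q * Sp k α x) ^ 2) =
        2 * α - 2 * (∫ x, (p * u m x + q * v m x) * Sp k α x) + 2 * α := by
      intro m
      simp_rw [Dpt]
      rw [integral_add (Di0 m) (iS2.const_mul _),
        integral_sub (h m).Iu ((cross_i m).const_mul 2), (h m).mass, integral_const_mul,
        integral_const_mul, Sp2_eq hk hα]
    simp_rw [e]
    have := ((cross_l.const_mul 2).const_sub (2 * α)).add_const (2 * α)
    convert this using 2
    ring
  have Bbd : ∀ m x, ‖(N m x - Tp k α x) ^ 2 * Sp k α x ^ 2‖ ≤ (2 * α) ^ 2 * Sp k α x ^ 2 := by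
    intro m x
    rw [Real.norm_of_nonneg (by positivity)]
    refine mul_le_mul_of_nonneg_right ?_ (sq_nonneg _)
    apply sq_le_sq'
    · have := abs_le.1 ((h m).absN x)
      have := abs_le.1 (Tp_abs (k := k) hα x)
      linarith
    · have := abs_le.1 ((h m).absN x)
      have := abs_le.1 (Tp_abs (k := k) hα x)
      linarith
  have Bm : ∀ m, AEStronglyMeasurable (fun x => (N m x - Tp k α x) ^ 2 * Sp k α x ^ 2) volume := by
    intro m
    have := (h m).contN
    have := Tp_cont k α
    exact Continuous.aestronglyMeasurable (by fun_prop)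
  have Bi : ∀ m, Integrable (fun x => (N m x - Tp k α x) ^ 2 * Sp k α x ^ 2) := fun m =>
    (iS2.const_mul _).mono' (Bm m) (Eventually.of_forall (Bbd m))
  have Bl : Tendsto (fun m => ∫ x, (N m x - Tp k α x) ^ 2 * Sp k α x ^ 2) atTop (nhds 0) := by
    have e : (0:ℝ) = ∫ x, (0:ℝ) ^ 2 * Sp k α x ^ 2 := by simp
    rw [e]
    refine tendsto_integral_of_dominated_convergence _ Bm (iS2.const_mul _)
      (fun m => Eventually.of_forall (Bbd m)) (Eventually.of_forall fun x => ?_)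
    exact ((hNlim x).pow 2).mul_const _
  refine ⟨hpq, Dl, ?_⟩
  have up : Tendsto (fun m => 3 * s m ^ 2 + 3 * (k ^ 2 * α ^ 2) *
      (∫ x, ((u m x - p * Sp k α x) ^ 2 + (v m x - q * Sp k α x) ^ 2))
      + 3 * (k ^ 2 * (p ^ 2 + q ^ 2)) * ∫ x, (N m x - Tp k α x) ^ 2 * Sp k α x ^ 2)
      atTop (nhds 0) := by
    have := (((s0.pow 2).const_mul 3).add (Dl.const_mul (3 * (k ^ 2 * α ^ 2)))).add
      (Bl.const_mul (3 * (k ^ 2 * (p ^ 2 + q ^ 2))))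
    simpa using this
  refine squeeze_zero (fun m => integral_nonneg fun x => by positivity) (fun m => ?_) up
  have one : ∀ (a w z n T S : ℝ), |n| ≤ α → (a + z * (k * T * S)) ^ 2 ≤
      3 * (a + k * n * w) ^ 2 + 3 * (k ^ 2 * α ^ 2) * (w - z * S) ^ 2 +
      3 * (k ^ 2 * z ^ 2) * ((n - T) ^ 2 * S ^ 2) := by
    intro a w z n T S hn
    have e : a + z * (k * T * S) = (a + k * n * w) + (- (k * n * (w - z * S)))
      + (- (k * z * ((n - T) * S))) := by ring
    have hn2 : n ^ 2 ≤ α ^ 2 := sq_le_sq' (abs_le.1 hn).1 (abs_le.1 hn).2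
    have h1 : (k * n * (w - z * S)) ^ 2 ≤ (k ^ 2 * α ^ 2) * (w - z * S) ^ 2 := by
      have : (k * n * (w - z * S)) ^ 2 = k ^ 2 * n ^ 2 * (w - z * S) ^ 2 := by ring
      rw [this]; gcongr
    have h2 : (k * z * ((n - T) * S)) ^ 2 = (k ^ 2 * z ^ 2) * ((n - T) ^ 2 * S ^ 2) := by ring
    rw [e]
    generalize a + k * n * w = A1 at *
    generalize k * n * (w - z * S) = A2 at *
    generalize k * z * ((n - T) * S) = A3 at *
    nlinarith [sq_nonneg (A1 + A2), sq_nonneg (A1 + A3), sq_nonneg (A2 - A3)]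
  have j1 : Integrable (fun x => 3 * ((u' m x + k * N m x * u m x) ^ 2 +
      (v' m x + k * N m x * v m x) ^ 2) + 3 * (k ^ 2 * α ^ 2) *
      ((u m x - p * Sp k α x) ^ 2 + (v m x - q * Sp k α x) ^ 2)) :=
    (((h m).Rint k).const_mul 3).add ((Di m).const_mul _)
  have j2 := (Bi m).const_mul (3 * (k ^ 2 * (p ^ 2 + q ^ 2)))
  refine (integral_mono_of_nonneg (Eventually.of_forall fun x => by
    simp only [Pi.zero_apply]; positivity) (j1.add j2)
    (Eventually.of_forall fun x => ?_)).trans ?_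
  · have o1 := one (u' m x) (u m x) p (N m x) (Tp k α x) (Sp k α x) ((h m).absN x)
    have o2 := one (v' m x) (v m x) q (N m x) (Tp k α x) (Sp k α x) ((h m).absN x)
    simp only [Pi.add_apply]
    linarith
  · have e := integral_add j1 j2
    simp only [Pi.add_apply]
    rw [e, integral_add (((h m).Rint k).const_mul 3) ((Di m).const_mul _), integral_const_mul,
      integral_const_mul, integral_const_mul]
    have := hR m
    linarith

theorem nsq (z : ℂ) : ‖z‖ ^ 2 = z.re ^ 2 + z.im ^ 2 := by
  rw [Complex.sq_norm, Complex.normSq_apply]; ring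

theorem center {α : ℝ} {ψ ψ' : ℝ → ℂ} (h : H1PairC ψ ψ') (hα : 0 < α)
    (hc : ∫ x, ‖ψ x‖ ^ 2 = 2 * α) :
    ∃ (x0 : ℝ) (N : ℝ → ℝ), Ctr α (fun t => (ψ (t + x0)).re) (fun t => (ψ (t + x0)).im)
      (fun t => (ψ' (t + x0)).re) (fun t => (ψ' (t + x0)).im) N := by
  have hcont : Continuous (fun x => ‖ψ x‖ ^ 2) := h.1.norm.pow 2
  have hi := h.2.1
  let F : ℝ → ℝ := fun x => ∫ t in (0:ℝ)..x, ‖ψ t‖ ^ 2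
  have hF : ∀ x, HasDerivAt F (‖ψ x‖ ^ 2) x := fun x =>
    intervalIntegral.integral_hasDerivAt_right (hcont.intervalIntegrable _ _)
      hcont.stronglyMeasurable.stronglyMeasurableAtFilter hcont.continuousAt
  have Ft : Tendsto F atTop (nhds (∫ x in Set.Ioi 0, ‖ψ x‖ ^ 2)) :=
    intervalIntegral_tendsto_integral_Ioi 0 hi.integrableOn tendsto_id
  have Fb : Tendsto F atBot (nhds (-∫ x in Set.Iic 0, ‖ψ x‖ ^ 2)) := by
    refine (intervalIntegral_tendsto_integral_Iic 0 hi.integrableOn tendsto_id).neg.congr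
      fun x => ?_
    exact (intervalIntegral.integral_symm _ _).symm
  have hsum : (∫ x in Set.Iic 0, ‖ψ x‖ ^ 2) + (∫ x in Set.Ioi 0, ‖ψ x‖ ^ 2) = 2 * α := by
    rw [intervalIntegral.integral_Iic_add_Ioi hi.integrableOn hi.integrableOn, hc]
  generalize (∫ x in Set.Ioi 0, ‖ψ x‖ ^ 2) = a at *
  generalize (∫ x in Set.Iic 0, ‖ψ x‖ ^ 2) = b at *
  have hFc : Continuous F := continuous_iff_continuousAt.2 fun x => (hF x).continuousAt
  obtain ⟨x0, hx0⟩ : a - α ∈ Set.range F := by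
    apply mem_range_of_exists_le_of_exists_ge hFc
    · exact (Fb.eventually_le_const (show -b < a - α by linarith)).exists
    · exact (Ft.eventually_const_le (show a - α < a by linarith)).exists
  have ht := H1_translate h x0
  have hm : ∫ x, ‖ψ (x + x0)‖ ^ 2 = 2 * α := by
    rw [← hc]; exact integral_add_right_eq_self (fun x => ‖ψ x‖ ^ 2) x0
  have hpos : 0 < ∫ x, ‖ψ (x + x0)‖ ^ 2 := by rw [hm]; linarith
  refine ⟨x0, fun t => F (t + x0) - (a - α), H1_acd_re ht hpos, H1_acd_im ht hpos, ?_, ?_, ?_, ?_,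
    ?_, ?_⟩
  · simpa only [nsq] using ht.2.1
  · simpa only [nsq] using ht.2.2.1
  · intro x
    rw [← nsq]
    exact ((hF (x + x0)).comp_add_const x x0).sub_const _
  · simp [hx0]
  · have := (Ft.comp (tendsto_atTop_add_const_right atTop x0 tendsto_id)).sub_const (a - α)
    rw [sub_sub_cancel] at this
    exact this
  · have := (Fb.comp (tendsto_atBot_add_const_right atBot x0 tendsto_id)).sub_const (a - α)
    rw [show -b - (a - α) = -α by linarith] at this
    exact this

theorem ENLS_eq {g₂ A : ℝ} (hg₂ : 0 < g₂) (ψ ψ' : ℝ → ℂ) (x0 : ℝ) :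
    ENLS g₂ A ψ ψ' = g₂ / 8 * ∫ t, (((ψ' (t + x0)).re ^ 2 + (ψ' (t + x0)).im ^ 2) -
      (-3 * A / g₂) * ((ψ (t + x0)).re ^ 2 + (ψ (t + x0)).im ^ 2) ^ 2) := by
  unfold ENLS
  rw [← integral_const_mul, ← integral_add_right_eq_self _ x0]
  congr 1
  ext t
  rw [← nsq, ← nsq]
  field_simp
  ring

theorem exists_theta (z : ℂ) : ∃ θ ∈ Set.Ico (0:ℝ) (2 * Real.pi),
    z = (‖z‖ : ℂ) * Complex.exp ((θ : ℂ) * Complex.I) := by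
  have h1 := Complex.neg_pi_lt_arg z
  have h2 := Complex.arg_le_pi z
  have hp := Real.pi_pos
  have e := (Complex.norm_mul_exp_arg_mul_I z).symm
  by_cases h : 0 ≤ z.arg
  · exact ⟨z.arg, ⟨h, by linarith⟩, e⟩
  · push Not at h
    refine ⟨z.arg + 2 * Real.pi, ⟨by linarith, by linarith⟩, ?_⟩
    push_cast
    rw [add_mul, Complex.exp_add, Complex.exp_two_pi_mul_I, mul_one]
    exact e

theorem stmt7 (g₂ A α : ℝ) (hg₂ : 0 < g₂) (hA : A < 0) (hα : 0 < α)
    (cN : ℝ) (hcN : cN = -3 * α ^ 3 * A ^ 2 / (4 * g₂))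
    (ψK : ℝ → ℂ)
    (hψK : ∀ x : ℝ,
      ψK x = ((α * Real.sqrt (-3 * A / g₂) * sech (-3 * α * A * x / g₂) : ℝ) : ℂ))
    (ψ : ℕ → ℝ → ℂ) (ψ' : ℕ → ℝ → ℂ)
    (hmem : ∀ m, H1PairC (ψ m) (ψ' m))
    (hcon : ∀ m, (∫ x : ℝ, ‖ψ m x‖ ^ 2) = 2 * α)
    (hmin : Tendsto (fun m => ENLS g₂ A (ψ m) (ψ' m)) atTop (nhds cN)) :
    ∃ (x : ℕ → ℝ) (mj : ℕ → ℕ) (θ y : ℝ), StrictMono mj ∧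
      θ ∈ Set.Ico (0 : ℝ) (2 * Real.pi) ∧
      Tendsto (fun j =>
        (∫ t : ℝ, ‖ψ (mj j) (t + x (mj j)) -
          Complex.exp ((θ : ℂ) * Complex.I) * ψK (t + y)‖ ^ 2) +
        ∫ t : ℝ, ‖ψ' (mj j) (t + x (mj j)) -
          Complex.exp ((θ : ℂ) * Complex.I) * deriv ψK (t + y)‖ ^ 2)
        atTop (nhds 0) := by
  set k : ℝ := -3 * A / g₂ with hkdef
  have hk : 0 < k := div_pos (by linarith) hg₂
  choose x N hC using fun m => center (hmem m) hα (hcon m)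
  let ρ : ℕ → ℝ := fun m => ∫ t, (((ψ' m (t + x m)).re + k * N m t * (ψ m (t + x m)).re) ^ 2 +
    ((ψ' m (t + x m)).im + k * N m t * (ψ m (t + x m)).im) ^ 2)
  have hρ0 : ∀ m, 0 ≤ ρ m := fun m => integral_nonneg fun t => by positivity
  have hρe : ∀ m, ρ m = 8 / g₂ * (ENLS g₂ A (ψ m) (ψ' m) - cN) := by
    intro m
    have e1 := (hC m).Req k
    have e2 := ENLS_eq (A := A) hg₂ (ψ m) (ψ' m) (x m)
    rw [← hkdef] at e2
    change ρ m = _ at e1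
    rw [e1, e2, hcN]
    generalize (∫ (t : ℝ), ((ψ' m (t + x m)).re ^ 2 + (ψ' m (t + x m)).im ^ 2 -
      k * ((ψ m (t + x m)).re ^ 2 + (ψ m (t + x m)).im ^ 2) ^ 2)) = J
    rw [hkdef]
    field_simp
    ring
  have hρl : Tendsto ρ atTop (nhds 0) := by
    have := (hmin.sub_const cN).const_mul (8 / g₂)
    rw [sub_self, mul_zero] at this
    exact this.congr fun m => (hρe m).symm
  let s : ℕ → ℝ := fun m => Real.sqrt (ρ m) + 1 / ((m : ℝ) + 1)
  have hs : ∀ m, 0 < s m := fun m => by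
    have : 0 < 1 / ((m : ℝ) + 1) := by positivity
    have := Real.sqrt_nonneg (ρ m)
    simp only [s]; linarith
  have s0 : Tendsto s atTop (nhds 0) := by
    have := (hρl.sqrt).add tendsto_one_div_add_atTop_nhds_zero_nat
    rw [Real.sqrt_zero, add_zero] at this
    exact this
  have hR : ∀ m, ρ m ≤ s m ^ 2 := fun m => by
    have h1 : Real.sqrt (ρ m) ≤ s m := by
      have : 0 < 1 / ((m : ℝ) + 1) := by positivity
      simp only [s]; linarith
    calc ρ m = Real.sqrt (ρ m) ^ 2 := (Real.sq_sqrt (hρ0 m)).symm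
      _ ≤ s m ^ 2 := pow_le_pow_left₀ (Real.sqrt_nonneg _) h1 2
  obtain ⟨M, hM⟩ := s0.bddAbove_range
  have hM' : ∀ m, s m ≤ M := fun m => hM ⟨m, rfl⟩
  have hM0 : 0 < M := (hs 0).trans_le (hM' 0)
  have hbd : ∀ m, ψ m (0 + x m) ∈ Metric.closedBall (0:ℂ) (k * α ^ 2 + (2 * α + 1) * M + 1) := by
    intro m
    rw [mem_closedBall_zero_iff]
    have h1 := (abs_le.1 ((hC m).Hbd k (hs m) (hR m) 0)).2
    rw [(hC m).N0, ← nsq] at h1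
    have h2 : (2 * α + 1) * s m ≤ (2 * α + 1) * M := by
      have := hM' m
      gcongr
    have h3 : 0 ≤ k * α ^ 2 + (2 * α + 1) * M := by positivity
    have h4 : ‖ψ m (0 + x m)‖ ^ 2 ≤ k * α ^ 2 + (2 * α + 1) * M := by nlinarith
    nlinarith [norm_nonneg (ψ m (0 + x m))]
  obtain ⟨z, -, mj, hmj, hz⟩ := tendsto_subseq_of_bounded Metric.isBounded_closedBall hbd
  have hp : Tendsto (fun j => (ψ (mj j) (0 + x (mj j))).re) atTop (nhds z.re) :=
    (Complex.continuous_re.tendsto z).comp hz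
  have hq : Tendsto (fun j => (ψ (mj j) (0 + x (mj j))).im) atTop (nhds z.im) :=
    (Complex.continuous_im.tendsto z).comp hz
  obtain ⟨r1, r2, r3⟩ := seq_lem hk hα (fun j => hC (mj j)) (fun j => hs (mj j))
    (s0.comp hmj.tendsto_atTop) (fun j => hR (mj j)) hp hq
  have hzn : ‖z‖ = α * Real.sqrt k := by
    have h1 : ‖z‖ ^ 2 = (α * Real.sqrt k) ^ 2 := by
      rw [nsq, r1, mul_pow, Real.sq_sqrt hk.le]; ring
    exact (pow_left_inj₀ (norm_nonneg _) (by positivity) two_ne_zero).1 h1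
  obtain ⟨θ, hθ, hzθ⟩ := exists_theta z
  rw [hzn] at hzθ
  have hK : ∀ t, ψK t = ((α * Real.sqrt k * Sp k α t : ℝ) : ℂ) := by
    intro t
    rw [hψK, Sp, sech]
    congr 4
    rw [hkdef]; ring
  have hKd : ∀ t, deriv ψK t = ((α * Real.sqrt k * (-(k * Tp k α t * Sp k α t)) : ℝ) : ℂ) := by
    intro t
    rw [funext hK]
    exact ((Sp_deriv k α t).const_mul (α * Real.sqrt k)).ofReal_comp.deriv
  refine ⟨x, mj, θ, 0, hmj, hθ, ?_⟩
  have h0 := r2.add r3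
  rw [add_zero] at h0
  refine h0.congr fun j => ?_
  have E1 : ∀ t, Complex.exp ((θ : ℂ) * Complex.I) * ψK (t + 0) = z * ((Sp k α t : ℝ) : ℂ) := by
    intro t
    rw [add_zero, hK, hzθ]; push_cast; ring
  have E2 : ∀ t, Complex.exp ((θ : ℂ) * Complex.I) * deriv ψK (t + 0) =
      z * ((-(k * Tp k α t * Sp k α t) : ℝ) : ℂ) := by
    intro t
    rw [add_zero, hKd, hzθ]; push_cast; ring
  simp_rw [E1, E2, nsq, Complex.sub_re, Complex.sub_im, Complex.re_mul_ofReal,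
    Complex.im_mul_ofReal]
  congr 3
  ext t
  ring
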